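/- In the ring ℚ[[q]] of formal power series, (1 − Y)(1 + Z) = 1, where Y = Σ_{n≥1} (n^{n−1}/n!) q^n and Z = Σ_{n≥1} (n^n/n!) q^n. -/

import Mathlib

/-- `Y = Σ_{n≥1} (n^{n-1}/n!) qⁿ` as a formal power series over `ℚ`. -/
noncomputable def Yq : PowerSeries ℚ :=
  PowerSeries.mk fun n => if n = 0 then 0 else (n : ℚ) ^ (n - 1) / n.factorial

/-- `Z = Σ_{n≥1} (nⁿ/n!) qⁿ` as a formal power series over `ℚ`. -/
noncomputable def Zq : PowerSeries ℚ :=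
  PowerSeries.mk fun n => if n = 0 then 0 else (n : ℚ) ^ n / n.factorial

open Polynomial in
theorem abel_poly (m : ℕ) :
    ∑ j ∈ Finset.range (m + 1),
      Polynomial.C (((m + 1).choose (j + 1) : ℚ) * ((j : ℚ) + 1) ^ j) *
        (Polynomial.X - Polynomial.C ((j : ℚ) + 1)) ^ (m - j)
      = Polynomial.C ((m : ℚ) + 1) * Polynomial.X ^ m := by
  induction m with
  | zero => simp
  | succ m ih =>
    rw [← sub_eq_zero]
    set D : ℚ[X] := (∑ j ∈ Finset.range (m + 1 + 1),
      Polynomial.C (((m + 1 + 1).choose (j + 1) : ℚ) * ((j : ℚ) + 1) ^ j) *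
        (Polynomial.X - Polynomial.C ((j : ℚ) + 1)) ^ (m + 1 - j))
      - Polynomial.C (((m + 1 : ℕ) : ℚ) + 1) * Polynomial.X ^ (m + 1) with hD
    have h1 : derivative D = 0 := by
      have h2 : derivative D = Polynomial.C ((m : ℚ) + 2) * ((∑ j ∈ Finset.range (m + 1),
          Polynomial.C (((m + 1).choose (j + 1) : ℚ) * ((j : ℚ) + 1) ^ j) *
          (Polynomial.X - Polynomial.C ((j : ℚ) + 1)) ^ (m - j))
          - Polynomial.C ((m : ℚ) + 1) * Polynomial.X ^ m) := by
        rw [hD, derivative_sub, Finset.sum_range_succ, derivative_add, derivative_sum, mul_sub,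
          Finset.mul_sum]
        congr 1
        · rw [Nat.sub_self, pow_zero, mul_one, derivative_C, add_zero]
          apply Finset.sum_congr rfl
          intro j hj
          have hj' : j ≤ m := by simpa [Nat.lt_succ_iff] using hj
          obtain ⟨d, rfl⟩ := Nat.exists_eq_add_of_le hj'
          have e1 : j + d + 1 - j = d + 1 := by omega
          have e2 : j + d - j = d := by omega
          have hc : ((j + d + 1).choose (j + 1) : ℚ) * ((j : ℚ) + d + 2)
              = ((j + d + 1 + 1).choose (j + 1) : ℚ) * ((d : ℚ) + 1) := by
            have := Nat.choose_mul_succ_eq (j + d + 1) (j + 1)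
            have e3 : j + d + 1 + 1 - (j + 1) = d + 1 := by omega
            rw [e3] at this
            have h := congrArg (Nat.cast : ℕ → ℚ) this
            push_cast at h
            linear_combination h
          rw [e1, e2, derivative_C_mul, derivative_X_sub_C_pow, ← mul_assoc, ← mul_assoc]
          congr 1
          rw [← C_mul, ← C_mul]
          congr 1
          push_cast
          linear_combination (-((j : ℚ) + 1) ^ j) * hc
        · rw [derivative_C_mul_X_pow, ← mul_assoc, ← C_mul]
          simp only [Nat.add_sub_cancel]
          congr 2
          push_cast
          ring
      rw [h2, ih, sub_self, mul_zero]
    have h3 : D.eval 0 = 0 := by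
      have hf := congrFun (fwdDiff_iter_pow_eq_zero_of_lt (R := ℚ) (Nat.lt_succ_self (m + 1))) 0
      rw [fwdDiff_iter_eq_sum_shift, Finset.sum_range_succ'] at hf
      simp only [hD, eval_sub, eval_finsetSum, eval_mul, eval_pow, eval_C, eval_X]
      rw [zero_pow (Nat.succ_ne_zero m), mul_zero, sub_zero]
      simp at hf
      refine Eq.trans ?_ hf
      apply Finset.sum_congr rfl
      intro j hj
      have hj' : j ≤ m + 1 := by simpa [Nat.lt_succ_iff] using hj
      have e : ((j : ℚ) + 1) ^ (m + 1) = ((j : ℚ) + 1) ^ j * ((j : ℚ) + 1) ^ (m + 1 - j) := by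
        rw [← pow_add]; congr 1; omega
      rw [zero_sub, neg_pow, e]
      ring
    have h4 := derivative_eq_zero.1 h1
    rw [eq_C_of_natDegree_eq_zero h4, coeff_zero_eq_eval_zero, h3, C_0]

theorem abel_num (m : ℕ) :
    ∑ j ∈ Finset.range (m + 1),
      ((m + 1).choose (j + 1) : ℚ) * ((j : ℚ) + 1) ^ j * ((m - j : ℕ) : ℚ) ^ (m - j)
      = ((m : ℚ) + 1) ^ (m + 1) := by
  have h := congrArg (Polynomial.eval ((m : ℚ) + 1)) (abel_poly m)
  simp only [Polynomial.eval_sub, Polynomial.eval_finsetSum, Polynomial.eval_mul,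
    Polynomial.eval_pow, Polynomial.eval_C, Polynomial.eval_X] at h
  rw [pow_succ', ← h]
  apply Finset.sum_congr rfl
  intro j hj
  have hj' : j ≤ m := by simpa [Nat.lt_succ_iff] using hj
  rw [Nat.cast_sub hj']
  congr 2
  ring

theorem Y_mul_one_add_Z : Yq * (1 + Zq) = Zq := by
  have hZ : 1 + Zq = PowerSeries.mk fun n => (n : ℚ) ^ n / n.factorial := by
    ext n
    rcases n with _ | n <;> simp [Zq, PowerSeries.coeff_one]
  rw [hZ]
  ext n
  rw [PowerSeries.coeff_mul, Finset.Nat.sum_antidiagonal_eq_sum_range_succ_mk]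
  rcases n with _ | m
  · simp [Yq, Zq]
  · rw [Finset.sum_range_succ']
    simp only [Yq, Zq, PowerSeries.coeff_mk, Nat.succ_ne_zero, if_false, if_true, zero_mul,
      add_zero, Nat.add_sub_cancel]
    push_cast
    rw [← abel_num m, Finset.sum_div]
    apply Finset.sum_congr rfl
    intro j hj
    have hj' : j ≤ m := by simpa [Nat.lt_succ_iff] using hj
    rw [Nat.cast_choose ℚ (Nat.succ_le_succ hj')]
    simp only [Nat.succ_eq_add_one, Nat.add_sub_add_right]
    have a1 : ((m + 1).factorial : ℚ) ≠ 0 := by exact_mod_cast Nat.factorial_ne_zero _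
    have a2 : ((j + 1).factorial : ℚ) ≠ 0 := by exact_mod_cast Nat.factorial_ne_zero _
    have a3 : ((m - j).factorial : ℚ) ≠ 0 := by exact_mod_cast Nat.factorial_ne_zero _
    field_simp

theorem one_sub_Y_mul_one_add_Z : (1 - Yq) * (1 + Zq) = 1 := by
  linear_combination -Y_mul_one_add_Z
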